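/- arXiv:math/0702563 — 2 statements merged into one kernel-verified Lean document; each statement's English description precedes it below -/
import Mathlib

section
/- (Lemma 2.) Let A = (A₁, A₂) be a pure commuting 2-contraction on H such that D_{A*} is injective, let (z₁,z₂) ∈ 𝔻² and x ∈ H. Then A₁*x = z̄₁x and A₂*x = z̄₂x if and only if (θ_A(z₁,z₂))*(D_{A*}x) = 0. -/
/-!
Write `T = A` and `Z` for the two row operators, `D = D_{A*}`, `E = D_A`. Since `E T* = T* D`,
`θ(Z)* D x = E (Z* y - T* x)`, where `(1 - T Z*) y = D² x = x - T T* x`, and `E` is injective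
because `D` is. So `θ(Z)* D x = 0` means `T* x = Z* y`. In that case `y - T T* x = x - T T* x`, so
`y = x` and `T* x = Z* x`; conversely, `T* x = Z* x` forces `y = x` by uniqueness of `y`.
-/

open ContinuousLinearMap Filter

section Intertwining

variable {H K : Type*} [NormedAddCommGroup H] [InnerProductSpace ℂ H] [CompleteSpace H]
  [NormedAddCommGroup K] [InnerProductSpace ℂ K] [CompleteSpace K]
  {A : K →L[ℂ] K} {B : H →L[ℂ] H}

-- `A` and `P P*` commute, so `A P P*` is positive; but it equals `-P B P*`.
theorem comp_eq_zero_of_comp_eq_neg_comp (hA : 0 ≤ A) (hB : 0 ≤ B) {P : H →L[ℂ] K}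
    (h : A ∘L P = -(P ∘L B)) : A ∘L P = 0 := by
  have hA_adj : adjoint A = A := (IsSelfAdjoint.of_nonneg hA).adjoint_eq
  have hB_adj : adjoint B = B := (IsSelfAdjoint.of_nonneg hB).adjoint_eq
  have h_adj : adjoint P ∘L A = -(B ∘L adjoint P) := by
    simpa [adjoint_comp, hA_adj, hB_adj] using congrArg adjoint h
  have hPP : 0 ≤ P ∘L adjoint P :=
    (nonneg_iff_isPositive _).2 (isPositive_self_comp_adjoint P)
  have hPBP : 0 ≤ P ∘L B ∘L adjoint P :=
    (nonneg_iff_isPositive _).2 (((nonneg_iff_isPositive B).1 hB).conj_adjoint P)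
  have h_left : A * (P ∘L adjoint P) = -(P ∘L B ∘L adjoint P) := by
    rw [mul_def, ← comp_assoc, h, neg_comp, comp_assoc]
  have h_right : (P ∘L adjoint P) * A = -(P ∘L B ∘L adjoint P) := by
    rw [mul_def, comp_assoc, h_adj, comp_neg]
  have h_zero : A * (P ∘L adjoint P) = 0 :=
    le_antisymm (h_left.trans_le (neg_nonpos.2 hPBP))
      (Commute.mul_nonneg hA hPP (h_left.trans h_right.symm))
  have h_adj_zero : adjoint (A ∘L P) = 0 := by
    rw [← adjoint_comp_self_eq_zero_iff, adjoint_adjoint, adjoint_comp, hA_adj]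
    calc (A ∘L P) ∘L adjoint P ∘L A = (A * (P ∘L adjoint P)) * A := rfl
      _ = 0 := by rw [h_zero, zero_mul]
  exact adjoint.map_eq_zero_iff.1 h_adj_zero

theorem comp_eq_comp_of_mul_self_comp_eq (hA : 0 ≤ A) (hB : 0 ≤ B) {X : H →L[ℂ] K}
    (h : (A * A) ∘L X = X ∘L (B * B)) : A ∘L X = X ∘L B := by
  set P : H →L[ℂ] K := A ∘L X - X ∘L B with hP
  have h_anti : A ∘L P = -(P ∘L B) := by
    calc A ∘L P = (A * A) ∘L X - A ∘L X ∘L B := by rw [hP, comp_sub]; rfl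
      _ = -(P ∘L B) := by rw [h, hP, sub_comp, neg_sub]; rfl
  have hAP : A ∘L P = 0 := comp_eq_zero_of_comp_eq_neg_comp hA hB h_anti
  have hPB : P ∘L B = 0 := by rwa [h_anti, neg_eq_zero] at hAP
  have hP_adj : adjoint P = adjoint X ∘L A - B ∘L adjoint X := by
    rw [hP, map_sub, adjoint_comp, adjoint_comp, (IsSelfAdjoint.of_nonneg hA).adjoint_eq,
      (IsSelfAdjoint.of_nonneg hB).adjoint_eq]
  have hP_gram : adjoint P ∘L P = -(B ∘L adjoint X ∘L P) := by
    rw [hP_adj, sub_comp, comp_assoc, hAP, comp_zero, zero_sub, comp_assoc]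
  have hP_gram_sq : adjoint (adjoint P ∘L P) ∘L (adjoint P ∘L P) = 0 := by
    rw [adjoint_comp, adjoint_adjoint, comp_assoc, hP_gram, comp_neg, ← comp_assoc P, hPB,
      zero_comp, neg_zero, comp_zero]
  exact sub_eq_zero.1
    (adjoint_comp_self_eq_zero_iff.1 (adjoint_comp_self_eq_zero_iff.1 hP_gram_sq))

end Intertwining

section Row

variable {𝕜 H K₁ K₂ : Type*} [RCLike 𝕜] [NormedAddCommGroup H] [InnerProductSpace 𝕜 H]
  [NormedAddCommGroup K₁] [InnerProductSpace 𝕜 K₁] [NormedAddCommGroup K₂]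
  [InnerProductSpace 𝕜 K₂]

/-- The row operator `(T₁, T₂)` on the Hilbert space direct sum, `(x, y) ↦ T₁ x + T₂ y`. -/
noncomputable def rowOperator (T₁ : K₁ →L[𝕜] H) (T₂ : K₂ →L[𝕜] H) :
    WithLp 2 (K₁ × K₂) →L[𝕜] H :=
  T₁ ∘L WithLp.fstL 2 𝕜 K₁ K₂ + T₂ ∘L WithLp.sndL 2 𝕜 K₁ K₂

variable {T₁ : K₁ →L[𝕜] H} {T₂ : K₂ →L[𝕜] H}

theorem eq_rowOperator {T : WithLp 2 (K₁ × K₂) →L[𝕜] H}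
    (hT : ∀ x y, T (WithLp.toLp 2 (x, y)) = T₁ x + T₂ y) : T = rowOperator T₁ T₂ :=
  ContinuousLinearMap.ext fun u => hT u.fst u.snd

theorem rowOperator_apply (u : WithLp 2 (K₁ × K₂)) :
    rowOperator T₁ T₂ u = T₁ u.fst + T₂ u.snd :=
  rfl

variable [CompleteSpace H] [CompleteSpace K₁] [CompleteSpace K₂]

theorem adjoint_rowOperator_apply (x : H) :
    adjoint (rowOperator T₁ T₂) x = WithLp.toLp 2 (adjoint T₁ x, adjoint T₂ x) := by
  refine ext_inner_right 𝕜 fun u => ?_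
  simp [adjoint_inner_left, rowOperator_apply, inner_add_right]

theorem rowOperator_comp_adjoint_rowOperator {S₁ : K₁ →L[𝕜] H} {S₂ : K₂ →L[𝕜] H} :
    rowOperator S₁ S₂ ∘L adjoint (rowOperator T₁ T₂) = S₁ ∘L adjoint T₁ + S₂ ∘L adjoint T₂ := by
  ext x
  simp [adjoint_rowOperator_apply, rowOperator_apply]

theorem adjoint_rowOperator_apply_eq_iff {S₁ : K₁ →L[𝕜] H} {S₂ : K₂ →L[𝕜] H} {x : H} :
    adjoint (rowOperator T₁ T₂) x = adjoint (rowOperator S₁ S₂) x ↔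
      adjoint T₁ x = adjoint S₁ x ∧ adjoint T₂ x = adjoint S₂ x := by
  rw [adjoint_rowOperator_apply, adjoint_rowOperator_apply, (WithLp.toLp_injective 2).eq_iff,
    Prod.mk.injEq]

end Row

section Defect

variable {H K : Type*} [NormedAddCommGroup H] [InnerProductSpace ℂ H] [CompleteSpace H]
  [NormedAddCommGroup K] [InnerProductSpace ℂ K] [CompleteSpace K]

/-- `D` is the defect operator `(1 - T* T)^{1/2}` of `T`, characterized as the positive square root
of `1 - T* T`. -/
structure IsDefectOperator (T : K →L[ℂ] H) (D : K →L[ℂ] K) : Prop where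
  nonneg : 0 ≤ D
  mul_self : D * D = 1 - adjoint T ∘L T

/-- The value at the operator point `Z` of the characteristic function of `T`,
`-T + D_{T*} (1 - Z T*)⁻¹ Z D_T`. The arguments `D`, `E` and `R` stand for `D_{T*}`, `D_T` and
`(1 - Z T*)⁻¹`. -/
noncomputable def characteristicFunction (T : K →L[ℂ] H) (D : H →L[ℂ] H) (E : K →L[ℂ] K)
    (R : H →L[ℂ] H) (Z : K →L[ℂ] H) : K →L[ℂ] H :=
  -T + D ∘L R ∘L Z ∘L E

variable {T Z : K →L[ℂ] H} {D R : H →L[ℂ] H} {E : K →L[ℂ] K}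

namespace IsDefectOperator

theorem adjoint_eq (hE : IsDefectOperator T E) : adjoint E = E :=
  (IsSelfAdjoint.of_nonneg hE.nonneg).adjoint_eq

theorem apply_apply (hE : IsDefectOperator T E) (u : K) : E (E u) = u - adjoint T (T u) :=
  congr($hE.mul_self u)

theorem apply_apply_of_adjoint (hD : IsDefectOperator (adjoint T) D) (x : H) :
    D (D x) = x - T (adjoint T x) := by
  rw [hD.apply_apply, adjoint_adjoint]

theorem comp_adjoint (hD : IsDefectOperator (adjoint T) D) (hE : IsDefectOperator T E) :
    E ∘L adjoint T = adjoint T ∘L D := by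
  refine comp_eq_comp_of_mul_self_comp_eq hE.nonneg hD.nonneg ?_
  ext x
  simp [hE.apply_apply, hD.apply_apply_of_adjoint]

theorem injective_of_adjoint (hD : IsDefectOperator (adjoint T) D) (hE : IsDefectOperator T E)
    (hD_inj : Function.Injective D) : Function.Injective E := by
  refine (injective_iff_map_eq_zero E).2 fun u hu => ?_
  have hu_fixed : u = adjoint T (T u) := by
    simpa [hu, sub_eq_zero] using (hE.apply_apply u).symm
  have hDD : D (D (T u)) = 0 := by
    rw [hD.apply_apply_of_adjoint, ← hu_fixed, sub_self]
  have hTu : T u = 0 := by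
    simpa only [map_eq_zero_iff D hD_inj] using hDD
  rw [hu_fixed, hTu, map_zero]

theorem adjoint_characteristicFunction_apply (hD : IsDefectOperator (adjoint T) D)
    (hE : IsDefectOperator T E) (x : H) :
    adjoint (characteristicFunction T D E R Z) (D x) =
      E (adjoint Z (adjoint R (x - T (adjoint T x))) - adjoint T x) := by
  have h_intertwine : E (adjoint T x) = adjoint T (D x) := congr($(hD.comp_adjoint hE) x)
  simp only [characteristicFunction, map_add, map_neg, adjoint_comp, hD.adjoint_eq, hE.adjoint_eq,
    add_apply, neg_apply, comp_apply, hD.apply_apply_of_adjoint]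
  rw [map_sub E, h_intertwine, neg_add_eq_sub]

end IsDefectOperator

theorem lemma_two_general (hD : IsDefectOperator (adjoint T) D) (hE : IsDefectOperator T E)
    (hD_inj : Function.Injective D) (hR_left : R * (1 - Z ∘L adjoint T) = 1)
    (hR_right : (1 - Z ∘L adjoint T) * R = 1) (x : H) :
    adjoint T x = adjoint Z x ↔ adjoint (characteristicFunction T D E R Z) (D x) = 0 := by
  have h_adj : adjoint (1 - Z ∘L adjoint T) = 1 - T ∘L adjoint Z := by
    rw [map_sub, adjoint_one, adjoint_comp, adjoint_adjoint]
  have hR_adj_right (y : H) : adjoint R y - T (adjoint Z (adjoint R y)) = y := by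
    have h := congrArg adjoint hR_left
    rw [mul_def, adjoint_comp, h_adj, adjoint_one] at h
    exact congr($h y)
  have hR_adj_left (y : H) : adjoint R (y - T (adjoint Z y)) = y := by
    have h := congrArg adjoint hR_right
    rw [mul_def, adjoint_comp, h_adj, adjoint_one] at h
    exact congr($h y)
  rw [hD.adjoint_characteristicFunction_apply hE,
    map_eq_zero_iff E (hD.injective_of_adjoint hE hD_inj), sub_eq_zero]
  constructor
  · intro hx
    rw [hx, hR_adj_left]
  · intro hy
    have hy_eq : adjoint R (x - T (adjoint T x)) = x := by
      simpa only [hy, sub_left_inj] using hR_adj_right (x - T (adjoint T x))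
    rw [← hy, hy_eq]

end Defect

theorem lemma_two
    {H : Type*} [NormedAddCommGroup H] [InnerProductSpace ℂ H] [CompleteSpace H]
    (A₁ A₂ : H →L[ℂ] H)
    (hcomm : A₁ * A₂ = A₂ * A₁)
    (hcontr : A₁ * adjoint A₁ + A₂ * adjoint A₂ ≤ 1)
    (hpure : ∀ x : H, Tendsto (fun n => ((A₁ * adjoint A₁ + A₂ * adjoint A₂) ^ n) x) atTop (nhds 0))
    (Dstar : H →L[ℂ] H) (hDstar_pos : 0 ≤ Dstar)
    (hDstar_sq : Dstar * Dstar = 1 - A₁ * adjoint A₁ - A₂ * adjoint A₂)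
    (hDstar_inj : Function.Injective ⇑Dstar)
    (Arow : WithLp 2 (H × H) →L[ℂ] H)
    (hArow : ∀ x y : H, Arow ((WithLp.equiv 2 (H × H)).symm (x, y)) = A₁ x + A₂ y)
    (DA : WithLp 2 (H × H) →L[ℂ] WithLp 2 (H × H)) (hDA_pos : 0 ≤ DA)
    (hDA_sq : DA * DA = 1 - (adjoint Arow) ∘L Arow)
    (z₁ z₂ : ℂ) (hz : ‖z₁‖ ^ 2 + ‖z₂‖ ^ 2 < 1)
    (R : H →L[ℂ] H) (hR₁ : R * (1 - z₁ • adjoint A₁ - z₂ • adjoint A₂) = 1)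
    (hR₂ : (1 - z₁ • adjoint A₁ - z₂ • adjoint A₂) * R = 1)
    (Zrow : WithLp 2 (H × H) →L[ℂ] H)
    (hZrow : ∀ x y : H, Zrow ((WithLp.equiv 2 (H × H)).symm (x, y)) = z₁ • x + z₂ • y)
    (x : H) :
    (adjoint A₁ x = (starRingEnd ℂ z₁) • x ∧ adjoint A₂ x = (starRingEnd ℂ z₂) • x) ↔
      adjoint (-Arow + Dstar ∘L R ∘L Zrow ∘L DA) (Dstar x) = 0 := by
  obtain rfl : Arow = rowOperator A₁ A₂ := eq_rowOperator hArow
  obtain rfl : Zrow = rowOperator (z₁ • 1) (z₂ • 1) := eq_rowOperator hZrow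
  have hZA : 1 - z₁ • adjoint A₁ - z₂ • adjoint A₂ =
      1 - rowOperator (z₁ • 1) (z₂ • 1) ∘L adjoint (rowOperator A₁ A₂) := by
    rw [rowOperator_comp_adjoint_rowOperator, smul_comp, smul_comp, one_def, id_comp, id_comp,
      sub_sub]
  have hD : IsDefectOperator (adjoint (rowOperator A₁ A₂)) Dstar :=
    ⟨hDstar_pos, by
      rw [hDstar_sq, adjoint_adjoint, rowOperator_comp_adjoint_rowOperator, sub_sub]; rfl⟩
  have h_eig : (adjoint A₁ x = (starRingEnd ℂ z₁) • x ∧ adjoint A₂ x = (starRingEnd ℂ z₂) • x) ↔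
      adjoint (rowOperator A₁ A₂) x =
        adjoint (rowOperator (z₁ • 1) (z₂ • 1) : WithLp 2 (H × H) →L[ℂ] H) x := by
    simp [adjoint_rowOperator_apply_eq_iff, map_smulₛₗ, adjoint_one]
  rw [hZA] at hR₁ hR₂
  exact h_eig.trans (lemma_two_general hD ⟨hDA_pos, hDA_sq⟩ hDstar_inj hR₁ hR₂ x)
end

section
/- (Theorem 4.2, part 1.) Let A = (A₁, A₂) be a commuting 2-contraction on H and λ = (λ₁,λ₂) ∈ 𝔻², λ ≠ 0. Then: (i) for every X ∈ H ⊕ H, ‖D_A((1_{H⊕H} − Λ*A)⁻¹(D_Λ X))‖ = ‖D_{Φ_λ(A)} X‖; (ii) the closure of the range of the operator D_A(1_{H⊕H} − Λ*A)⁻¹D_Λ equals the closure of the range of D_A; (iii) for every x ∈ H, ‖D_{A*}((1_H − ΛA*)⁻¹(D_{Λ*} x))‖ = ‖D_{Φ_λ(A)*} x‖; (iv) the closure of the range of D_{A*}(1_H − ΛA*)⁻¹D_{Λ*} equals the closure of the range of D_{A*}. (Hence the maps Ω(D_{Φ_λ(A)}X) = D_A(1_{H⊕H} − Λ*A)⁻¹D_Λ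 X and Ω*(D_{Φ_λ(A)*}x) = D_{A*}(1_H − ΛA*)⁻¹D_{Λ*} x extend to unitaries between the corresponding defect spaces.) -/
open ContinuousLinearMap Filter

/-!
For a strict contraction `L`, the Julia operator `(x, y) ↦ (L x - D_{L†} y, D_L x + L† y)` is
isometric, thanks to the intertwining relation `D_{L†} L = L D_L`. With `Y = (1 - L†A)⁻¹ D_L X` it
sends `(X, A Y)` to `(Φ X, Y)`, where `Φ` is the Möbius transform of `A`; hence
`‖Y‖² - ‖A Y‖² = ‖X‖² - ‖Φ X‖²`, i.e. `‖D_A Y‖ = ‖D_Φ X‖`. As `(1 - L†A)⁻¹` and `D_L` are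
invertible, the range of `D_A` is not changed by composing with them.

The assertions about adjoint defects are the same ones for `A†`, because the Möbius transform of
`A†` along `L†` is `Φ†`.
-/

open scoped InnerProduct Ring

lemma eq_ringInverse {M₀ : Type*} [MonoidWithZero M₀] {a b : M₀} (hba : b * a = 1)
    (hab : a * b = 1) : b = a⁻¹ʳ :=
  (Ring.inverse_unit ⟨a, b, hab, hba⟩).symm

section Module

variable {R M N : Type*} [Ring R] [AddCommGroup M] [Module R M] [TopologicalSpace M]
  [AddCommGroup N] [Module R N] [TopologicalSpace N]

lemma comp_eq_comp_of_mul_one_sub_comp_eq_one [IsTopologicalAddGroup M] [IsTopologicalAddGroup N]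
    {B : M →L[R] N} {C : N →L[R] M} {T : N →L[R] N} {S : M →L[R] M}
    (hT : T * (1 - B ∘L C) = 1) (hS : (1 - C ∘L B) * S = 1) : T ∘L B = B ∘L S := by
  have hpush : B ∘L (1 - C ∘L B) = (1 - B ∘L C) ∘L B := by
    rw [sub_comp, comp_sub, comp_assoc, one_def, one_def, id_comp, comp_id]
  calc T ∘L B = T ∘L (B ∘L (1 - C ∘L B)) ∘L S := by
        rw [comp_assoc, ← mul_def, hS, one_def, comp_id]
    _ = (T * (1 - B ∘L C)) ∘L B ∘L S := by rw [hpush, mul_def, comp_assoc, comp_assoc]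
    _ = B ∘L S := by rw [hT, one_def, id_comp]

lemma range_comp_of_isUnit (D : M →L[R] N) {U : M →L[R] M} (hU : IsUnit U) :
    Set.range ⇑(D ∘L U) = Set.range ⇑D := by
  obtain ⟨u, rfl⟩ := hU
  exact (ContinuousLinearEquiv.ofUnit u).surjective.range_comp D

end Module

lemma isUnit_one_sub_comp {𝕜 E F : Type*} [NontriviallyNormedField 𝕜]
    [SeminormedAddCommGroup E] [NormedSpace 𝕜 E] [NormedAddCommGroup F] [NormedSpace 𝕜 F]
    [CompleteSpace F] {B : E →L[𝕜] F} {C : F →L[𝕜] E} (h : ‖B‖ * ‖C‖ < 1) :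
    IsUnit (1 - B ∘L C) :=
  isUnit_one_sub_of_norm_lt_one ((opNorm_comp_le B C).trans_lt h)

section Hilbert

variable {E F : Type*} [NormedAddCommGroup E] [InnerProductSpace ℂ E] [CompleteSpace E]
  [NormedAddCommGroup F] [InnerProductSpace ℂ F] [CompleteSpace F]

lemma norm_adjoint (B : E →L[ℂ] F) : ‖B†‖ = ‖B‖ := LinearIsometryEquiv.norm_map adjoint B

lemma isUnit_one_sub_adjoint_comp {A L : E →L[ℂ] F} (hA : ‖A‖ ≤ 1) (hL : ‖L‖ < 1) :
    IsUnit (1 - L† ∘L A) :=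
  isUnit_one_sub_comp <| by
    rw [norm_adjoint]
    exact mul_lt_one_of_nonneg_of_lt_one_left (norm_nonneg L) hL hA

/-- For a solution `X` of the Sylvester equation `X D = - D' X`, the commuting product
`(X†X) D = - X†D'X` is both nonnegative and nonpositive. -/
lemma comp_eq_zero_of_comp_eq_neg_comp_s12 {D : E →L[ℂ] E} {D' : F →L[ℂ] F} {X : E →L[ℂ] F}
    (hD : 0 ≤ D) (hD' : 0 ≤ D') (h : X ∘L D = -(D' ∘L X)) : X ∘L D = 0 := by
  have hP : 0 ≤ X† ∘L X := (nonneg_iff_isPositive _).2 (isPositive_adjoint_comp_self X)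
  have hQ : 0 ≤ X† ∘L D' ∘L X :=
    (nonneg_iff_isPositive _).2 (((nonneg_iff_isPositive _).1 hD').adjoint_conj X)
  have hPD : (X† ∘L X) * D = -(X† ∘L D' ∘L X) := by
    rw [mul_def, comp_assoc, h, comp_neg]
  have hself : IsSelfAdjoint ((X† ∘L X) * D) := hPD ▸ (IsSelfAdjoint.of_nonneg hQ).neg
  have hcomm : Commute (X† ∘L X) D :=
    ((IsSelfAdjoint.of_nonneg hP).commute_iff (IsSelfAdjoint.of_nonneg hD)).2 hself
  have hzero : (X† ∘L X) * D = 0 :=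
    le_antisymm (hPD ▸ neg_nonpos.2 hQ) (hcomm.mul_nonneg hP hD)
  rw [← adjoint_comp_self_eq_zero_iff, adjoint_comp, comp_assoc, ← comp_assoc _ X]
  exact (congrArg (D† ∘L ·) hzero).trans (comp_zero _)

lemma comp_eq_comp_of_mul_self_comp_eq_s12 {D : E →L[ℂ] E} {D' : F →L[ℂ] F} {B : E →L[ℂ] F}
    (hD : 0 ≤ D) (hD' : 0 ≤ D') (h : (D' * D') ∘L B = B ∘L (D * D)) : D' ∘L B = B ∘L D := by
  obtain ⟨X, hX⟩ : ∃ X, X = D' ∘L B - B ∘L D := ⟨_, rfl⟩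
  have hsylvester : X ∘L D = -(D' ∘L X) := by
    simp only [hX, sub_comp, comp_sub, neg_sub, ← comp_assoc, ← mul_def, h]
    rw [mul_def, comp_assoc, comp_assoc]
  have hXD : X ∘L D = 0 := comp_eq_zero_of_comp_eq_neg_comp_s12 hD hD' hsylvester
  have hD'X : D' ∘L X = 0 := by rw [← neg_eq_zero, ← hsylvester, hXD]
  have hXX : X ∘L X† ∘L X = 0 := by
    have hX' : X† = B† ∘L D' - D ∘L B† := by
      rw [hX, map_sub, adjoint_comp, adjoint_comp, (IsSelfAdjoint.of_nonneg hD).adjoint_eq,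
        (IsSelfAdjoint.of_nonneg hD').adjoint_eq]
    rw [hX', sub_comp, comp_sub, comp_assoc, hD'X, comp_assoc, ← comp_assoc X D, hXD, comp_zero,
      comp_zero, zero_comp, sub_zero]
  have hzero : X† ∘L X = 0 := by
    rw [← adjoint_comp_self_eq_zero_iff, adjoint_comp, adjoint_adjoint, comp_assoc, hXX, comp_zero]
  exact sub_eq_zero.1 (hX ▸ adjoint_comp_self_eq_zero_iff.1 hzero)

/-- The defect operator `D_B = (1 - B†B)^{1/2}` of a contraction `B`. The square root takes the
junk value `0` when `1 - B†B` is not positive, so contractivity is assumed wherever the value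
matters. -/
noncomputable def defectOperator (B : E →L[ℂ] F) : E →L[ℂ] E := CFC.sqrt (1 - B† ∘L B)

lemma defectOperator_nonneg (B : E →L[ℂ] F) : 0 ≤ defectOperator B := CFC.sqrt_nonneg _

lemma adjoint_defectOperator (B : E →L[ℂ] F) : (defectOperator B)† = defectOperator B :=
  (IsSelfAdjoint.of_nonneg (defectOperator_nonneg B)).adjoint_eq

lemma eq_defectOperator {B : E →L[ℂ] F} {D : E →L[ℂ] E} (hD : 0 ≤ D)
    (h : D * D = 1 - B† ∘L B) : D = defectOperator B :=
  (CFC.sqrt_unique h hD).symm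

lemma eq_defectOperator_adjoint {B : E →L[ℂ] F} {D : F →L[ℂ] F} (hD : 0 ≤ D)
    (h : D * D = 1 - B ∘L B†) : D = defectOperator (B†) :=
  eq_defectOperator hD (by rw [h, adjoint_adjoint])

lemma one_sub_adjoint_comp_self_nonneg_iff {B : E →L[ℂ] F} : 0 ≤ 1 - B† ∘L B ↔ ‖B‖ ≤ 1 := by
  have hB : 0 ≤ B† ∘L B := (nonneg_iff_isPositive _).2 (isPositive_adjoint_comp_self B)
  rw [sub_nonneg, ← CStarAlgebra.norm_le_one_iff_of_nonneg _ hB, norm_adjoint_comp_self, ← sq,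
    sq_le_one_iff₀ (norm_nonneg _)]

lemma defectOperator_mul_self {B : E →L[ℂ] F} (hB : ‖B‖ ≤ 1) :
    defectOperator B * defectOperator B = 1 - B† ∘L B :=
  CFC.sqrt_mul_sqrt_self _ (one_sub_adjoint_comp_self_nonneg_iff.2 hB)

lemma norm_sq_defectOperator_apply {B : E →L[ℂ] F} (hB : ‖B‖ ≤ 1) (x : E) :
    ‖defectOperator B x‖ ^ 2 = ‖x‖ ^ 2 - ‖B x‖ ^ 2 := by
  rw [apply_norm_sq_eq_inner_adjoint_left, adjoint_defectOperator, ← mul_def,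
    defectOperator_mul_self hB, sub_apply, inner_sub_left, map_sub,
    ← apply_norm_sq_eq_inner_adjoint_left, one_apply_eq_self, inner_self_eq_norm_sq]

lemma isUnit_defectOperator {B : E →L[ℂ] F} (hB : ‖B‖ < 1) : IsUnit (defectOperator B) := by
  rw [← isUnit_mul_self_iff, defectOperator_mul_self hB.le]
  exact isUnit_one_sub_adjoint_comp hB.le hB

lemma defectOperator_adjoint_comp {B : E →L[ℂ] F} (hB : ‖B‖ ≤ 1) :
    defectOperator (B†) ∘L B = B ∘L defectOperator B := by
  apply comp_eq_comp_of_mul_self_comp_eq_s12 (defectOperator_nonneg _) (defectOperator_nonneg _)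
  rw [defectOperator_mul_self hB, defectOperator_mul_self ((norm_adjoint B).trans_le hB),
    adjoint_adjoint, sub_comp, comp_sub, comp_assoc, one_def, one_def, id_comp, comp_id]

lemma norm_sq_julia {L : E →L[ℂ] F} (hL : ‖L‖ ≤ 1) (x : E) (y : F) :
    ‖L x - defectOperator (L†) y‖ ^ 2 + ‖defectOperator L x + (L†) y‖ ^ 2 = ‖x‖ ^ 2 + ‖y‖ ^ 2 := by
  have hcross : inner ℂ (L x) (defectOperator (L†) y) = inner ℂ (defectOperator L x) ((L†) y) := by
    rw [adjoint_inner_right, ← adjoint_inner_left, adjoint_defectOperator]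
    exact congrArg (inner ℂ · y) (DFunLike.congr_fun (defectOperator_adjoint_comp hL) x)
  rw [@norm_sub_sq ℂ, @norm_add_sq ℂ, norm_sq_defectOperator_apply hL,
    norm_sq_defectOperator_apply ((norm_adjoint L).trans_le hL), hcross]
  ring

section Moebius

/-- The Möbius transform `Φ_L(A) = L - D_{L†} (1 - A L†)⁻¹ A D_L` of a contraction `A` along a
strict contraction `L`. The bound `‖A L†‖ < 1` makes `Ring.inverse` a genuine inverse. -/
noncomputable def moebiusTransform (L A : E →L[ℂ] F) : E →L[ℂ] F :=
  L - defectOperator (L†) ∘L (1 - A ∘L L†)⁻¹ʳ ∘L A ∘L defectOperator L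

variable {A L : E →L[ℂ] F}

lemma ringInverse_comp_eq_comp_ringInverse (hA : ‖A‖ ≤ 1) (hL : ‖L‖ < 1) :
    (1 - A ∘L L†)⁻¹ʳ ∘L A = A ∘L (1 - L† ∘L A)⁻¹ʳ := by
  have hunit : IsUnit (1 - A ∘L L†) := isUnit_one_sub_comp <| by
    rw [norm_adjoint]
    exact mul_lt_one_of_nonneg_of_lt_one_right hA (norm_nonneg L) hL
  exact comp_eq_comp_of_mul_one_sub_comp_eq_one (Ring.inverse_mul_cancel _ hunit)
    (Ring.mul_inverse_cancel _ (isUnit_one_sub_adjoint_comp hA hL))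

lemma adjoint_moebiusTransform (hA : ‖A‖ ≤ 1) (hL : ‖L‖ < 1) :
    (moebiusTransform L A)† = moebiusTransform (L†) (A†) := by
  have hinv : ((1 - A ∘L L†)⁻¹ʳ)† = (1 - L ∘L A†)⁻¹ʳ := by
    rw [← star_eq_adjoint, ← Ring.inverse_star, star_sub, star_one, star_eq_adjoint, adjoint_comp,
      adjoint_adjoint]
  have hpush : (1 - A† ∘L L)⁻¹ʳ ∘L A† = A† ∘L (1 - L ∘L A†)⁻¹ʳ := by
    simpa only [adjoint_adjoint] using ringInverse_comp_eq_comp_ringInverse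
      ((norm_adjoint A).trans_le hA) ((norm_adjoint L).trans_lt hL)
  simp only [moebiusTransform, map_sub, adjoint_comp, adjoint_defectOperator, hinv,
    adjoint_adjoint, comp_assoc]
  rw [← comp_assoc (A†), ← hpush, comp_assoc]

lemma norm_sq_sub_norm_sq_moebiusTransform (hA : ‖A‖ ≤ 1) (hL : ‖L‖ < 1) (x : E) :
    ‖x‖ ^ 2 - ‖moebiusTransform L A x‖ ^ 2 =
      ‖(1 - L† ∘L A)⁻¹ʳ (defectOperator L x)‖ ^ 2 -
        ‖A ((1 - L† ∘L A)⁻¹ʳ (defectOperator L x))‖ ^ 2 := by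
  set y := (1 - L† ∘L A)⁻¹ʳ (defectOperator L x)
  have hfst : moebiusTransform L A x = L x - defectOperator (L†) (A y) := by
    rw [moebiusTransform, ← comp_assoc _ A, ringInverse_comp_eq_comp_ringInverse hA hL]
    rfl
  have hsnd : defectOperator L x + (L†) (A y) = y := by
    rw [← eq_sub_iff_add_eq]
    exact (DFunLike.congr_fun (Ring.mul_inverse_cancel _
      (isUnit_one_sub_adjoint_comp hA hL)) (defectOperator L x)).symm
  have hjulia := norm_sq_julia hL.le x (A y)
  rw [← hfst, hsnd] at hjulia
  linarith

lemma norm_moebiusTransform_le_one (hA : ‖A‖ ≤ 1) (hL : ‖L‖ < 1) :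
    ‖moebiusTransform L A‖ ≤ 1 := by
  refine opNorm_le_bound _ zero_le_one fun x => ?_
  rw [one_mul, ← sq_le_sq₀ (norm_nonneg _) (norm_nonneg _), ← sub_nonneg,
    norm_sq_sub_norm_sq_moebiusTransform hA hL, ← norm_sq_defectOperator_apply hA]
  exact sq_nonneg _

lemma norm_defectOperator_moebiusTransform (hA : ‖A‖ ≤ 1) (hL : ‖L‖ < 1) (x : E) :
    ‖defectOperator A ((1 - L† ∘L A)⁻¹ʳ (defectOperator L x))‖ =
      ‖defectOperator (moebiusTransform L A) x‖ := by
  rw [← sq_eq_sq₀ (norm_nonneg _) (norm_nonneg _), norm_sq_defectOperator_apply hA,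
    norm_sq_defectOperator_apply (norm_moebiusTransform_le_one hA hL),
    norm_sq_sub_norm_sq_moebiusTransform hA hL]

lemma range_defectOperator_mul_ringInverse_mul_defectOperator (hA : ‖A‖ ≤ 1) (hL : ‖L‖ < 1) :
    Set.range ⇑(defectOperator A * (1 - L† ∘L A)⁻¹ʳ * defectOperator L) =
      Set.range ⇑(defectOperator A) := by
  rw [mul_def, range_comp_of_isUnit _ (isUnit_defectOperator hL), mul_def,
    range_comp_of_isUnit _ (isUnit_one_sub_adjoint_comp hA hL).ringInverse]

end Moebius

theorem omega_unitaries_general {A L : E →L[ℂ] F} (hA : ‖A‖ ≤ 1) (hL : ‖L‖ < 1) :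
    (∀ x : E, ‖defectOperator A ((1 - L† ∘L A)⁻¹ʳ (defectOperator L x))‖ =
        ‖defectOperator (moebiusTransform L A) x‖) ∧
      Set.range ⇑(defectOperator A * (1 - L† ∘L A)⁻¹ʳ * defectOperator L) =
        Set.range ⇑(defectOperator A) ∧
      (∀ y : F, ‖defectOperator (A†) ((1 - L ∘L A†)⁻¹ʳ (defectOperator (L†) y))‖ =
        ‖defectOperator ((moebiusTransform L A)†) y‖) ∧
      Set.range ⇑(defectOperator (A†) * (1 - L ∘L A†)⁻¹ʳ * defectOperator (L†)) =
        Set.range ⇑(defectOperator (A†)) := by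
  have hA' : ‖A†‖ ≤ 1 := (norm_adjoint A).trans_le hA
  have hL' : ‖L†‖ < 1 := (norm_adjoint L).trans_lt hL
  refine ⟨norm_defectOperator_moebiusTransform hA hL,
    range_defectOperator_mul_ringInverse_mul_defectOperator hA hL, ?_, ?_⟩
  · simpa only [adjoint_moebiusTransform hA hL, adjoint_adjoint] using
      norm_defectOperator_moebiusTransform hA' hL'
  · simpa only [adjoint_adjoint] using
      range_defectOperator_mul_ringInverse_mul_defectOperator hA' hL'

end Hilbert

section Row

variable {E₁ E₂ F : Type*} [NormedAddCommGroup E₁] [InnerProductSpace ℂ E₁] [CompleteSpace E₁]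
  [NormedAddCommGroup E₂] [InnerProductSpace ℂ E₂] [CompleteSpace E₂]
  [NormedAddCommGroup F] [InnerProductSpace ℂ F] [CompleteSpace F]

lemma row_comp_adjoint {B₁ : E₁ →L[ℂ] F} {B₂ : E₂ →L[ℂ] F} {B : WithLp 2 (E₁ × E₂) →L[ℂ] F}
    (hB : ∀ x y, B ((WithLp.equiv 2 (E₁ × E₂)).symm (x, y)) = B₁ x + B₂ y) :
    B ∘L B† = B₁ ∘L B₁† + B₂ ∘L B₂† := by
  have hadj (z : F) : (B†) z = (WithLp.equiv 2 (E₁ × E₂)).symm ((B₁†) z, (B₂†) z) := by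
    refine ext_inner_right ℂ fun v => ?_
    rw [adjoint_inner_left, show B v = B₁ v.fst + B₂ v.snd from hB v.fst v.snd, inner_add_right,
      ← adjoint_inner_left, ← adjoint_inner_left, WithLp.prod_inner_apply]
    rfl
  ext z
  exact (congrArg B (hadj z)).trans (hB _ _)

lemma scalar_row_comp_adjoint {μ₁ μ₂ : ℂ} {L : WithLp 2 (F × F) →L[ℂ] F}
    (hL : ∀ x y, L ((WithLp.equiv 2 (F × F)).symm (x, y)) = μ₁ • x + μ₂ • y) :
    L ∘L L† = ((‖μ₁‖ ^ 2 + ‖μ₂‖ ^ 2 : ℝ) : ℂ) • (1 : F →L[ℂ] F) := by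
  have hsmul (μ : ℂ) : (μ • (1 : F →L[ℂ] F)) ∘L (μ • (1 : F →L[ℂ] F))† =
      ((‖μ‖ ^ 2 : ℝ) : ℂ) • (1 : F →L[ℂ] F) := by
    rw [← mul_def, ← star_eq_adjoint, star_smul, star_one, smul_mul_smul_comm, one_mul,
      Complex.star_def, Complex.mul_conj']
    push_cast
    rfl
  rw [row_comp_adjoint (B₁ := μ₁ • 1) (B₂ := μ₂ • 1) hL, hsmul, hsmul, ← add_smul]
  push_cast
  rfl

lemma norm_scalar_row_lt_one {μ₁ μ₂ : ℂ} {L : WithLp 2 (F × F) →L[ℂ] F}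
    (hL : ∀ x y, L ((WithLp.equiv 2 (F × F)).symm (x, y)) = μ₁ • x + μ₂ • y)
    (hμ : ‖μ₁‖ ^ 2 + ‖μ₂‖ ^ 2 < 1) : ‖L‖ < 1 := by
  have hsq : ‖L‖ ^ 2 ≤ ‖μ₁‖ ^ 2 + ‖μ₂‖ ^ 2 := by
    have h := norm_adjoint_comp_self (L†)
    rw [adjoint_adjoint, scalar_row_comp_adjoint hL, norm_adjoint, ← sq] at h
    rw [← h, norm_smul, Complex.norm_of_nonneg (by positivity)]
    exact mul_le_of_le_one_right (by positivity) norm_id_le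
  exact (sq_lt_one_iff₀ (norm_nonneg L)).1 (hsq.trans_lt hμ)

lemma defectOperator_adjoint_scalar_row {μ₁ μ₂ : ℂ} {L : WithLp 2 (F × F) →L[ℂ] F}
    (hL : ∀ x y, L ((WithLp.equiv 2 (F × F)).symm (x, y)) = μ₁ • x + μ₂ • y)
    (hμ : ‖μ₁‖ ^ 2 + ‖μ₂‖ ^ 2 ≤ 1) :
    defectOperator (L†) =
      ((√(1 - ‖μ₁‖ ^ 2 - ‖μ₂‖ ^ 2) : ℝ) : ℂ) • (1 : F →L[ℂ] F) := by
  refine (eq_defectOperator_adjoint ?_ ?_).symm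
  · rw [Complex.coe_smul]
    exact smul_nonneg (Real.sqrt_nonneg _) zero_le_one
  · rw [smul_mul_smul_comm, one_mul, scalar_row_comp_adjoint hL, ← Complex.ofReal_mul,
      Real.mul_self_sqrt (by linarith)]
    push_cast
    module

end Row

theorem omega_unitaries
    {H : Type*} [NormedAddCommGroup H] [InnerProductSpace ℂ H] [CompleteSpace H]
    (A₁ A₂ : H →L[ℂ] H)
    (hcomm : A₁ * A₂ = A₂ * A₁)
    (hcontr : A₁ * adjoint A₁ + A₂ * adjoint A₂ ≤ 1)
    (Dstar : H →L[ℂ] H) (hDstar_pos : 0 ≤ Dstar)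
    (hDstar_sq : Dstar * Dstar = 1 - A₁ * adjoint A₁ - A₂ * adjoint A₂)
    (Arow : WithLp 2 (H × H) →L[ℂ] H)
    (hArow : ∀ x y : H, Arow ((WithLp.equiv 2 (H × H)).symm (x, y)) = A₁ x + A₂ y)
    (DA : WithLp 2 (H × H) →L[ℂ] WithLp 2 (H × H)) (hDA_pos : 0 ≤ DA)
    (hDA_sq : DA * DA = 1 - (adjoint Arow) ∘L Arow)
    (μ₁ μ₂ : ℂ) (hμ : ‖μ₁‖ ^ 2 + ‖μ₂‖ ^ 2 < 1) (hμ0 : (μ₁, μ₂) ≠ ((0 : ℂ), (0 : ℂ)))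
    (s : ℝ) (hs : s = Real.sqrt (1 - ‖μ₁‖ ^ 2 - ‖μ₂‖ ^ 2))
    (Lrow : WithLp 2 (H × H) →L[ℂ] H)
    (hLrow : ∀ x y : H, Lrow ((WithLp.equiv 2 (H × H)).symm (x, y)) = μ₁ • x + μ₂ • y)
    (DL : WithLp 2 (H × H) →L[ℂ] WithLp 2 (H × H)) (hDL_pos : 0 ≤ DL)
    (hDL_sq : DL * DL = 1 - (adjoint Lrow) ∘L Lrow)
    (T₁ : H →L[ℂ] H) (hT₁ : T₁ * (1 - Arow ∘L adjoint Lrow) = 1)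
    (hT₁' : (1 - Arow ∘L adjoint Lrow) * T₁ = 1)
    (T₂ : H →L[ℂ] H) (hT₂ : T₂ * (1 - Lrow ∘L adjoint Arow) = 1)
    (hT₂' : (1 - Lrow ∘L adjoint Arow) * T₂ = 1)
    (S₂ : WithLp 2 (H × H) →L[ℂ] WithLp 2 (H × H))
    (hS₂ : S₂ * (1 - (adjoint Lrow) ∘L Arow) = 1) (hS₂' : (1 - (adjoint Lrow) ∘L Arow) * S₂ = 1)
    (Phi : WithLp 2 (H × H) →L[ℂ] H)
    (hPhi : Phi = (Lrow - (s : ℂ) • (T₁ ∘L Arow ∘L DL)))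
    (DB : WithLp 2 (H × H) →L[ℂ] WithLp 2 (H × H)) (hDB_pos : 0 ≤ DB)
    (hDB_sq : DB * DB = 1 - (adjoint Phi) ∘L Phi)
    (DBstar : H →L[ℂ] H) (hDBstar_pos : 0 ≤ DBstar)
    (hDBstar_sq : DBstar * DBstar = 1 - Phi ∘L (adjoint Phi)) :
    (∀ X : WithLp 2 (H × H), ‖DA (S₂ (DL X))‖ = ‖DB X‖) ∧
      closure (Set.range ⇑(DA * S₂ * DL)) = closure (Set.range ⇑DA) ∧
      (∀ x : H, ‖Dstar (T₂ ((s : ℂ) • x))‖ = ‖DBstar x‖) ∧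
      closure (Set.range ⇑(Dstar * T₂ * ((s : ℂ) • (1 : H →L[ℂ] H)))) =
        closure (Set.range ⇑Dstar) := by
  have hA : ‖Arow‖ ≤ 1 := one_sub_adjoint_comp_self_nonneg_iff.1
    (hDA_sq ▸ (IsSelfAdjoint.of_nonneg hDA_pos).mul_self_nonneg)
  have hL : ‖Lrow‖ < 1 := norm_scalar_row_lt_one hLrow hμ
  have hDLstar : defectOperator (Lrow†) = (s : ℂ) • 1 :=
    hs ▸ defectOperator_adjoint_scalar_row hLrow hμ.le
  obtain rfl : DA = defectOperator Arow := eq_defectOperator hDA_pos hDA_sq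
  obtain rfl : DL = defectOperator Lrow := eq_defectOperator hDL_pos hDL_sq
  obtain rfl : Dstar = defectOperator (Arow†) := eq_defectOperator_adjoint hDstar_pos <| by
    rw [hDstar_sq, row_comp_adjoint hArow, sub_sub, mul_def, mul_def]
  obtain rfl : T₁ = (1 - Arow ∘L Lrow†)⁻¹ʳ := eq_ringInverse hT₁ hT₁'
  obtain rfl : T₂ = (1 - Lrow ∘L Arow†)⁻¹ʳ := eq_ringInverse hT₂ hT₂'
  obtain rfl : S₂ = (1 - Lrow† ∘L Arow)⁻¹ʳ := eq_ringInverse hS₂ hS₂'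
  obtain rfl : Phi = moebiusTransform Lrow Arow := by
    rw [hPhi, moebiusTransform, hDLstar, smul_comp, one_def, id_comp]
  obtain rfl := eq_defectOperator hDB_pos hDB_sq
  obtain rfl := eq_defectOperator_adjoint hDBstar_pos hDBstar_sq
  obtain ⟨hnorm, hrange, hnorm', hrange'⟩ := omega_unitaries_general hA hL
  rw [hDLstar] at hnorm' hrange'
  exact ⟨hnorm, congrArg closure hrange, hnorm', congrArg closure hrange'⟩
end
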